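/- The generalized hypergeometric series ₄F₃(1/4, 1/4, 1/4, 3/4; 1/2, 5/4, 5/4; 1/16) equals (1/2)·[π²·(1/10 − 1/(3√3)) + (1/(2√3))·ψ′(1/3)], where ψ′(1/3) = 9·∑_{k≥0} 1/(3k+1)². Concretely, the sum over n ≥ 0 of ((1/4)ₙ)³·(3/4)ₙ / ((1/2)ₙ·((5/4)ₙ)²·n!) · (1/16)ⁿ equals (1/2)·[π²·(1/10 − 1/(3√3)) + (9/(2√3))·∑_{k≥0} 1/(3k+1)²]. -/

import Mathlib

open Real

/-- The Pochhammer symbol (shifted factorial) `(a)ₙ` for a real number `a`. -/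
noncomputable def poch (a : ℝ) (n : ℕ) : ℝ := Polynomial.eval a (ascPochhammer ℝ n)

/-!
Let `S z = ∑ choose (-1/2) n / (2n+1)² z^(2n+1)`. Its even-indexed coefficients are those of the
hypergeometric series, so `2z · ₄F₃(…; z⁴) = S z - i S (i z)`. Moreover `z S' z = arsinh z`, and
integrating along `z = sinh u` gives `S (sinh u) = u² / 2 + Li₂ (1 - e^(-2u)) / 2`.

At `z = 1/2` we have `u = log φ`, and the dilogarithm is taken at `φ⁻¹`, where the reflection,
Landen and duplication formulas close up because `φ⁻² = 1 - φ⁻¹`. At `z = i/2` we have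
`u = iπ/6`, and the dilogarithm is taken at `e^(iπ/3)`; duplication reduces it to cube roots of
unity, where the series splits into residue classes modulo `3`.
-/

/-! ### Pochhammer symbols and binomial coefficients -/

theorem poch_zero (a : ℝ) : poch a 0 = 1 := by simp [poch]

theorem poch_succ (a : ℝ) (n : ℕ) : poch a (n + 1) = poch a n * (a + n) :=
  ascPochhammer_succ_eval n a

theorem poch_pos {a : ℝ} (ha : 0 < a) (n : ℕ) : 0 < poch a n :=
  ascPochhammer_pos n a ha

theorem poch_one (n : ℕ) : poch 1 n = n.factorial :=
  ascPochhammer_eval_one ℝ n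

theorem mul_poch_add_one (a : ℝ) (n : ℕ) : a * poch (a + 1) n = poch a n * (a + n) := by
  induction n with
  | zero => simp [poch_zero]
  | succ n ih => rw [poch_succ, ← mul_assoc, ih, poch_succ]; push_cast; ring

theorem poch_two_mul (a : ℝ) (n : ℕ) :
    poch a (2 * n) = 4 ^ n * poch (a / 2) n * poch ((a + 1) / 2) n := by
  induction n with
  | zero => simp [poch_zero]
  | succ n ih =>
    rw [show 2 * (n + 1) = 2 * n + 1 + 1 by ring]
    simp only [poch_succ, ih]
    push_cast
    ring

theorem poch_le_factorial {a : ℝ} (h0 : 0 < a) (h1 : a ≤ 1) (n : ℕ) : poch a n ≤ n.factorial := by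
  induction n with
  | zero => simp [poch_zero]
  | succ n ih =>
    have hn : a + n ≤ n + 1 := by linarith
    rw [poch_succ, Nat.factorial_succ, mul_comm]
    push_cast
    exact mul_le_mul hn ih (poch_pos h0 n).le (by positivity)

theorem choose_neg_eq_poch_div_factorial (a : ℝ) (n : ℕ) :
    Ring.choose (-a) n = (-1) ^ n * poch a n / n.factorial := by
  rw [Ring.choose_eq_smul, Polynomial.descPochhammer_smeval_eq_ascPochhammer,
    Polynomial.ascPochhammer_smeval_cast, Polynomial.ascPochhammer_smeval_eq_eval, poch,
    ← neg_neg a, ascPochhammer_eval_neg_eq_descPochhammer, descPochhammer_eval_eq_ascPochhammer,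
    ← mul_assoc, ← mul_pow]
  simp [div_eq_inv_mul]

theorem choose_neg_half_eq_ofReal (n : ℕ) :
    Ring.choose (-1 / 2 : ℂ) n = (((-1) ^ n * poch (1 / 2) n / n.factorial : ℝ) : ℂ) := by
  rw [← choose_neg_eq_poch_div_factorial]
  push_cast
  ring_nf

theorem norm_choose_neg_half_le_one (n : ℕ) : ‖Ring.choose (-1 / 2 : ℂ) n‖ ≤ 1 := by
  rw [choose_neg_half_eq_ofReal, Complex.norm_real, norm_div, norm_mul, norm_pow, norm_neg,
    norm_one, one_pow, one_mul, Real.norm_of_nonneg (poch_pos one_half_pos n).le, Real.norm_natCast]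
  exact div_le_one_of_le₀ (poch_le_factorial one_half_pos (by norm_num) n) (by positivity)

theorem poch_quotient_eq_choose_neg_half (n : ℕ) :
    ((poch (1/4) n ^ 3 * poch (3/4) n /
        (poch (1/2) n * poch (5/4) n ^ 2 * n.factorial) : ℝ) : ℂ)
      = Ring.choose (-1 / 2 : ℂ) (2 * n) / (2 * (2 * n : ℕ) + 1) ^ 2 := by
  have hpos {a : ℝ} (ha : 0 < a) : poch a n ≠ 0 := (poch_pos ha n).ne'
  have h₁ := hpos (a := 1 / 4) (by norm_num)
  have h₂ := hpos (a := 1 / 2) (by norm_num)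
  have hfive : poch (5/4) n = poch (1/4) n * (4 * n + 1) := by
    have := mul_poch_add_one (1/4) n
    norm_num at this
    linear_combination 4 * this
  have hhalf : poch (1/2) (2 * n) = 4 ^ n * poch (1/4) n * poch (3/4) n := by
    rw [poch_two_mul]; norm_num
  have hone : ((2 * n).factorial : ℝ) = 4 ^ n * poch (1/2) n * n.factorial := by
    rw [← poch_one, poch_two_mul, ← poch_one n]; norm_num
  rw [choose_neg_half_eq_ofReal]
  norm_cast
  rw [hfive, hhalf, hone, pow_mul]
  push_cast
  field_simp
  norm_num

/-! ### Derivatives along segments and power series -/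

theorem eq_of_hasDerivAt_zero_of_openSegment {E : Type*} [NormedAddCommGroup E]
    [NormedSpace ℂ E] {f : ℂ → E} {a b : ℂ}
    (hc : ContinuousOn f (segment ℝ a b))
    (hd : ∀ w ∈ openSegment ℝ a b, w ≠ a → HasDerivAt f 0 w) : f b = f a := by
  rcases eq_or_ne a b with rfl | hab
  · rfl
  let γ : ℝ →ᵃ[ℝ] ℂ := AffineMap.lineMap a b
  have hγ : Continuous γ := AffineMap.lineMap_continuous
  have hγc : Set.MapsTo γ (Set.Icc 0 1) (segment ℝ a b) := fun t ht => by
    rw [segment_eq_image_lineMap]; exact Set.mem_image_of_mem _ ht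
  have hγo : Set.MapsTo γ (Set.Ioo 0 1) (openSegment ℝ a b) := fun t ht => by
    rw [openSegment_eq_image_lineMap]; exact Set.mem_image_of_mem _ ht
  have hcont : ContinuousOn (f ∘ γ) (Set.Icc 0 1) := hc.comp hγ.continuousOn hγc
  have hderiv (t : ℝ) (ht : t ∈ Set.Ioo (0 : ℝ) 1) : HasDerivAt (f ∘ γ) 0 t := by
    have hne : γ t ≠ a := by simpa [γ, hab] using ht.1.ne'
    simpa using (hd _ (hγo ht) hne).scomp_of_eq t
      (AffineMap.hasDerivAt_lineMap (a := a) (b := b)) rfl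
  obtain ⟨c, hconst⟩ := isOpen_Ioo.exists_is_const_of_deriv_eq_zero isPreconnected_Ioo
    (fun t ht => (hderiv t ht).differentiableAt.differentiableWithinAt)
    (fun t ht => (hderiv t ht).deriv)
  have hclosed : Set.EqOn (f ∘ γ) (fun _ => c) (Set.Icc 0 1) :=
    Set.EqOn.of_subset_closure hconst hcont continuousOn_const Set.Ioo_subset_Icc_self
      (closure_Ioo zero_ne_one).ge
  simpa [γ] using (hclosed (Set.right_mem_Icc.2 zero_le_one)).trans
    (hclosed (Set.left_mem_Icc.2 zero_le_one)).symm

theorem two_mul_add_one_injective : Function.Injective fun n : ℕ => 2 * n + 1 :=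
  (add_left_injective 1).comp (mul_right_injective₀ two_ne_zero)

theorem tsum_add_tsum_alternating {R : Type*} [Ring R] [UniformSpace R] [IsUniformAddGroup R]
    [CompleteSpace R] [T2Space R] {f : ℕ → R} (hf : Summable f) :
    ∑' n, f n + ∑' n, (-1) ^ n * f n = ∑' n, f (2 * n) + ∑' n, f (2 * n) := by
  have heven : Summable fun n => f (2 * n) :=
    hf.comp_injective (mul_right_injective₀ two_ne_zero)
  have hodd : Summable fun n => f (2 * n + 1) := hf.comp_injective two_mul_add_one_injective
  have halt : HasSum (fun n => (-1) ^ n * f n) (∑' n, f (2 * n) + -∑' n, f (2 * n + 1)) :=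
    .even_add_odd (by simpa using heven.hasSum) (by simpa [pow_succ] using hodd.hasSum.neg)
  rw [halt.tsum_eq, ← tsum_even_add_odd heven hodd]
  abel

section PowerSeries

variable {c : ℕ → ℂ} {e : ℕ → ℕ} {z : ℂ}

theorem norm_mul_pow_le_pow (hc : ∀ n, ‖c n‖ ≤ 1) {r : ℝ} (hz : ‖z‖ ≤ r) (n : ℕ) :
    ‖c n * z ^ e n‖ ≤ r ^ e n := by
  rw [norm_mul, norm_pow]
  exact (mul_le_of_le_one_left (by positivity) (hc n)).trans (by gcongr)

theorem summable_pow_comp (he : e.Injective) {r : ℝ} (h0 : 0 ≤ r) (h1 : r < 1) :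
    Summable fun n => r ^ e n :=
  (summable_geometric_of_lt_one h0 h1).comp_injective he

theorem summable_mul_pow (hc : ∀ n, ‖c n‖ ≤ 1) (he : e.Injective) (hz : ‖z‖ < 1) :
    Summable fun n => c n * z ^ e n :=
  .of_norm_bounded (summable_pow_comp he (norm_nonneg z) hz) (norm_mul_pow_le_pow hc le_rfl)

theorem differentiableAt_tsum_mul_pow (hc : ∀ n, ‖c n‖ ≤ 1) (he : e.Injective) (hz : ‖z‖ < 1) :
    DifferentiableAt ℂ (fun w => ∑' n, c n * w ^ e n) z := by
  obtain ⟨r, hzr, hr⟩ := exists_between hz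
  have h := Complex.differentiableOn_tsum_of_summable_norm
    (summable_pow_comp he ((norm_nonneg z).trans hzr.le) hr)
    (F := fun n w => c n * w ^ e n) (fun n => by fun_prop) Metric.isOpen_ball
    fun n w hw => norm_mul_pow_le_pow hc (mem_ball_zero_iff.1 hw).le n
  exact h.differentiableAt (Metric.isOpen_ball.mem_nhds (mem_ball_zero_iff.2 hzr))

theorem mul_deriv_tsum_mul_pow (hc : ∀ n, ‖c n‖ ≤ 1) (he : e.Injective) (hz : ‖z‖ < 1) :
    z * deriv (fun w => ∑' n, c n * w ^ e n) z = ∑' n, e n * c n * z ^ e n := by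
  obtain ⟨r, hzr, hr⟩ := exists_between hz
  have h := Complex.hasSum_deriv_of_summable_norm
    (summable_pow_comp he ((norm_nonneg z).trans hzr.le) hr)
    (F := fun n w => c n * w ^ e n) (fun n => by fun_prop) Metric.isOpen_ball
    (fun n w hw => norm_mul_pow_le_pow hc (mem_ball_zero_iff.1 hw).le n) (mem_ball_zero_iff.2 hzr)
  rw [← h.tsum_eq, ← tsum_mul_left]
  refine tsum_congr fun n => ?_
  rw [deriv_const_mul_field, deriv_pow_field]
  cases e n with
  | zero => simp
  | succ k => simp only [Nat.add_sub_cancel]; ring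

end PowerSeries

/-! ### The dilogarithm -/

/-- The dilogarithm `Li₂`, as the sum of its Taylor series at `0`; it is used on the closed unit
disc, where the series converges. The term `n = 0` vanishes since `1 / 0 = 0`. -/
noncomputable def dilog (z : ℂ) : ℂ := ∑' n : ℕ, 1 / (n : ℂ) ^ 2 * z ^ n

theorem dilog_zero : dilog 0 = 0 := by
  rw [dilog, tsum_eq_single 0 fun n hn => by simp [hn]]
  simp

theorem hasSum_one_div_nat_sq : HasSum (fun n : ℕ => 1 / (n : ℂ) ^ 2) ((π : ℂ) ^ 2 / 6) := by
  simpa using Complex.hasSum_ofReal.2 hasSum_zeta_two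

theorem dilog_one : dilog 1 = (π : ℂ) ^ 2 / 6 := by
  simpa [dilog] using hasSum_one_div_nat_sq.tsum_eq

theorem norm_one_div_nat_sq_le_one (n : ℕ) : ‖1 / (n : ℂ) ^ 2‖ ≤ 1 := by
  rcases n.eq_zero_or_pos with rfl | hn
  · simp
  · have : (1 : ℝ) ≤ n := by exact_mod_cast hn
    simpa using inv_le_one_of_one_le₀ (one_le_pow₀ this)

theorem norm_dilog_term_le {z : ℂ} (hz : ‖z‖ ≤ 1) (n : ℕ) :
    ‖1 / (n : ℂ) ^ 2 * z ^ n‖ ≤ 1 / (n : ℝ) ^ 2 := by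
  simpa using mul_le_of_le_one_right (by positivity) (pow_le_one₀ (norm_nonneg z) hz)

theorem summable_dilog {z : ℂ} (hz : ‖z‖ ≤ 1) : Summable fun n : ℕ => 1 / (n : ℂ) ^ 2 * z ^ n :=
  .of_norm_bounded hasSum_zeta_two.summable (norm_dilog_term_le hz)

theorem continuousOn_dilog : ContinuousOn dilog (Metric.closedBall 0 1) :=
  continuousOn_tsum (fun n => by fun_prop) hasSum_zeta_two.summable
    fun n z hz => norm_dilog_term_le (mem_closedBall_zero_iff.1 hz) n

theorem differentiableAt_dilog {z : ℂ} (hz : ‖z‖ < 1) : DifferentiableAt ℂ dilog z :=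
  differentiableAt_tsum_mul_pow norm_one_div_nat_sq_le_one Function.injective_id hz

theorem mul_deriv_dilog {z : ℂ} (hz : ‖z‖ < 1) : z * deriv dilog z = -Complex.log (1 - z) := by
  rw [← (Complex.hasSum_taylorSeries_neg_log hz).tsum_eq]
  refine (mul_deriv_tsum_mul_pow norm_one_div_nat_sq_le_one Function.injective_id hz).trans
    (tsum_congr fun n => ?_)
  rcases eq_or_ne n 0 with rfl | hn
  · simp
  · simp only [id]
    field_simp

theorem hasDerivAt_dilog {z : ℂ} (hz : ‖z‖ < 1) (h0 : z ≠ 0) :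
    HasDerivAt dilog (-Complex.log (1 - z) / z) z := by
  rw [← mul_deriv_dilog hz, mul_div_cancel_left₀ _ h0]
  exact (differentiableAt_dilog hz).hasDerivAt

theorem continuousOn_deriv_dilog : ContinuousOn (deriv dilog) (Metric.ball 0 1) := by
  have h : DifferentiableOn ℂ dilog (Metric.ball 0 1) := fun z hz =>
    (differentiableAt_dilog (mem_ball_zero_iff.1 hz)).differentiableWithinAt
  exact (h.deriv Metric.isOpen_ball).continuousOn

theorem one_sub_mem_slitPlane {z : ℂ} (hz : ‖z‖ < 1) : 1 - z ∈ Complex.slitPlane := by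
  simpa [sub_eq_add_neg] using Complex.mem_slitPlane_of_norm_lt_one (z := -z) (by simpa)

theorem continuousAt_mul_log_zero : ContinuousAt (fun z : ℂ => z * Complex.log z) 0 := by
  have hbound (z : ℂ) : ‖z * Complex.log z‖ ≤ |‖z‖ * Real.log ‖z‖| + ‖z‖ * π := by
    calc ‖z * Complex.log z‖ ≤ ‖z‖ * (|Real.log ‖z‖| + |Complex.arg z|) := by
          rw [norm_mul]
          gcongr
          have := Complex.norm_le_abs_re_add_abs_im (Complex.log z)
          rwa [Complex.log_re, Complex.log_im] at this
      _ ≤ |‖z‖ * Real.log ‖z‖| + ‖z‖ * π := by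
          rw [mul_add, abs_mul, abs_norm]
          gcongr
          exact Complex.abs_arg_le_pi z
  have hlim : Continuous fun z : ℂ => |‖z‖ * Real.log ‖z‖| + ‖z‖ * π := by fun_prop
  rw [ContinuousAt, zero_mul]
  exact squeeze_zero_norm hbound (by simpa using hlim.tendsto 0)

theorem continuousAt_log_mul_log_one_sub_zero :
    ContinuousAt (fun z : ℂ => Complex.log z * Complex.log (1 - z)) 0 := by
  have hball : Metric.ball (0 : ℂ) 1 ∈ nhds 0 := Metric.ball_mem_nhds 0 one_pos
  have h : ContinuousAt (fun z : ℂ => -(z * Complex.log z * deriv dilog z)) 0 :=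
    (continuousAt_mul_log_zero.mul (continuousOn_deriv_dilog.continuousAt hball)).neg
  refine h.congr ?_
  filter_upwards [hball] with z hz
  linear_combination -Complex.log z * mul_deriv_dilog (mem_ball_zero_iff.1 hz)

theorem mem_slitPlane_of_norm_one_sub_lt_one {z : ℂ} (hz : ‖1 - z‖ < 1) :
    z ∈ Complex.slitPlane := by
  simpa using one_sub_mem_slitPlane hz

theorem hasDerivAt_dilog_add_dilog_one_sub_add_log_mul_log {z : ℂ} (hz : ‖z‖ < 1)
    (hz' : ‖1 - z‖ < 1) :
    HasDerivAt (fun w => dilog w + dilog (1 - w) + Complex.log w * Complex.log (1 - w)) 0 z := by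
  have h0 : z ≠ 0 := Complex.slitPlane_ne_zero (mem_slitPlane_of_norm_one_sub_lt_one hz')
  have h1 : 1 - z ≠ 0 := Complex.slitPlane_ne_zero (one_sub_mem_slitPlane hz)
  have hsub := (hasDerivAt_id' z).const_sub 1
  have h := ((hasDerivAt_dilog hz h0).add ((hasDerivAt_dilog hz' h1).comp z hsub)).add
    ((Complex.hasDerivAt_log (mem_slitPlane_of_norm_one_sub_lt_one hz')).mul
      (hsub.clog (one_sub_mem_slitPlane hz)))
  refine h.congr_deriv ?_
  rw [sub_sub_cancel]
  field_simp
  ring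

theorem dilog_add_dilog_one_sub {z : ℂ} (hz : ‖z‖ < 1) (hz' : ‖1 - z‖ < 1) :
    dilog z + dilog (1 - z) = (π : ℂ) ^ 2 / 6 - Complex.log z * Complex.log (1 - z) := by
  have hball : segment ℝ 0 z ⊆ Metric.ball 0 1 :=
    (convex_ball 0 1).segment_subset (by simp) (by simpa)
  have hball' : segment ℝ 0 z ⊆ Metric.closedBall 1 1 :=
    (convex_closedBall 1 1).segment_subset (by simp) (by simpa [dist_eq_norm'] using hz'.le)
  have hopen : openSegment ℝ 0 z ⊆ Metric.ball 1 1 := by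
    have := (convex_ball (1 : ℂ) 1).openSegment_closure_interior_subset_interior
      (x := 0) (y := z) (by simp [closure_ball])
      (by simpa [Metric.isOpen_ball.interior_eq, dist_eq_norm'])
    rwa [Metric.isOpen_ball.interior_eq] at this
  have hderiv {w : ℂ} (hw : w ∈ segment ℝ 0 z) (hw' : w ∈ Metric.ball 1 1) :=
    hasDerivAt_dilog_add_dilog_one_sub_add_log_mul_log (mem_ball_zero_iff.1 (hball hw))
      (by rwa [← dist_eq_norm'])
  have hcont : ContinuousOn
      (fun w => dilog w + dilog (1 - w) + Complex.log w * Complex.log (1 - w))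
      (segment ℝ 0 z) := by
    intro w hw
    rcases eq_or_ne w 0 with rfl | hw0
    · refine ((continuousOn_dilog.mono (hball.trans Metric.ball_subset_closedBall) 0 hw).add
        (ContinuousOn.comp (g := dilog) continuousOn_dilog (by fun_prop) (fun v hv => ?_) 0 hw)).add
        continuousAt_log_mul_log_one_sub_zero.continuousWithinAt
      rw [mem_closedBall_zero_iff, ← dist_eq_norm']
      exact hball' hv
    · refine (hderiv hw ?_).continuousAt.continuousWithinAt
      rw [← insert_endpoints_openSegment] at hw
      rcases hw with rfl | rfl | hw
      · exact absurd rfl hw0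
      · simpa [dist_eq_norm']
      · exact hopen hw
  rw [eq_sub_iff_add_eq, eq_of_hasDerivAt_zero_of_openSegment hcont fun w hw _ =>
    hderiv (openSegment_subset_segment ℝ 0 z hw) (hopen hw)]
  simp [dilog_zero, dilog_one]

theorem norm_div_sub_one_lt_one {z : ℂ} (hz : z.re < 1 / 2) : ‖z / (z - 1)‖ < 1 := by
  have h : ‖z‖ < ‖z - 1‖ := by
    rw [← sq_lt_sq₀ (norm_nonneg z) (norm_nonneg _), Complex.sq_norm, Complex.sq_norm,
      Complex.normSq_apply, Complex.normSq_apply, Complex.sub_re, Complex.sub_im, Complex.one_re,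
      Complex.one_im]
    linarith
  rw [norm_div]
  exact (div_lt_one ((norm_nonneg z).trans_lt h)).2 h

theorem hasDerivAt_dilog_add_dilog_div_sub_one_add_log_sq {z : ℂ} (h0 : z ≠ 0) (hz : ‖z‖ < 1)
    (hre : z.re < 1 / 2) :
    HasDerivAt (fun w => dilog w + dilog (w / (w - 1)) + Complex.log (1 - w) ^ 2 / 2) 0 z := by
  have hslit := one_sub_mem_slitPlane hz
  have h1 : 1 - z ≠ 0 := Complex.slitPlane_ne_zero hslit
  have h1' : z - 1 ≠ 0 := sub_ne_zero.2 (sub_ne_zero.1 h1).symm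
  have hlog : Complex.log (1 - z / (z - 1)) = -Complex.log (1 - z) := by
    rw [← Complex.log_inv _ (Complex.slitPlane_arg_ne_pi hslit)]
    congr 1
    field_simp
    ring
  have hquot : HasDerivAt (fun w : ℂ => w / (w - 1)) (-1 / (z - 1) ^ 2) z :=
    ((hasDerivAt_id' z).div ((hasDerivAt_id' z).sub_const 1) h1').congr_deriv (by ring)
  have h := ((hasDerivAt_dilog hz h0).add
    ((hasDerivAt_dilog (norm_div_sub_one_lt_one hre) (div_ne_zero h0 h1')).comp z hquot)).add
    (((((hasDerivAt_id' z).const_sub 1).clog hslit).pow 2).div_const 2)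
  refine h.congr_deriv ?_
  rw [hlog]
  field_simp
  ring

theorem dilog_add_dilog_div_sub_one {z : ℂ} (hz : ‖z‖ < 1) (hre : z.re < 1 / 2) :
    dilog z + dilog (z / (z - 1)) = -Complex.log (1 - z) ^ 2 / 2 := by
  have hdom : segment ℝ 0 z ⊆ Metric.ball 0 1 ∩ {w | w.re < 1 / 2} :=
    ((convex_ball 0 1).inter (convex_halfSpace_re_lt _)).segment_subset (by simp)
      ⟨mem_ball_zero_iff.2 hz, hre⟩
  have hcont : ContinuousOn (fun w => dilog w + dilog (w / (w - 1)) + Complex.log (1 - w) ^ 2 / 2)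
      (segment ℝ 0 z) := by
    intro w hw
    obtain ⟨hw1, hw2⟩ := hdom hw
    have hslit := one_sub_mem_slitPlane (mem_ball_zero_iff.1 hw1)
    have hw0 : w - 1 ≠ 0 := sub_ne_zero.2 (sub_ne_zero.1 (Complex.slitPlane_ne_zero hslit)).symm
    have hquot : ContinuousAt (fun v : ℂ => v / (v - 1)) w := by fun_prop (disch := assumption)
    have hcomp : ContinuousAt (fun v => dilog (v / (v - 1))) w :=
      ContinuousAt.comp (g := dilog)
        (differentiableAt_dilog (norm_div_sub_one_lt_one hw2)).continuousAt hquot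
    have hlog : ContinuousAt (fun v => Complex.log (1 - v)) w :=
      (continuousAt_const.sub continuousAt_id).clog hslit
    exact (((differentiableAt_dilog (mem_ball_zero_iff.1 hw1)).continuousAt.add hcomp).add
      ((hlog.pow 2).div_const 2)).continuousWithinAt
  rw [neg_div, eq_neg_iff_add_eq_zero, eq_of_hasDerivAt_zero_of_openSegment hcont fun w hw hne =>
    have hw' := hdom (openSegment_subset_segment ℝ 0 z hw)
    hasDerivAt_dilog_add_dilog_div_sub_one_add_log_sq hne (mem_ball_zero_iff.1 hw'.1) hw'.2]
  simp [dilog_zero]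

theorem dilog_add_dilog_neg {z : ℂ} (hz : ‖z‖ ≤ 1) : dilog z + dilog (-z) = dilog (z ^ 2) / 2 := by
  have h := tsum_add_tsum_alternating (summable_dilog hz)
  have hneg : dilog (-z) = ∑' n : ℕ, (-1) ^ n * (1 / (n : ℂ) ^ 2 * z ^ n) :=
    tsum_congr fun n => by rw [neg_pow]; ring
  rw [dilog, hneg, h, ← two_mul, dilog, ← tsum_mul_left, ← tsum_div_const]
  refine tsum_congr fun n => ?_
  rw [pow_mul]
  push_cast
  ring

theorem dilog_of_sq_eq_one_sub {z : ℂ} (hz : ‖z‖ < 1) (hsq : z ^ 2 = 1 - z) :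
    dilog z = (π : ℂ) ^ 2 / 10 - 3 / 5 * (Complex.log z * Complex.log (1 - z)) +
      Complex.log (1 + z) ^ 2 / 5 := by
  have hnorm : ‖1 - z‖ < 1 := by
    rw [← hsq, norm_pow]
    exact pow_lt_one₀ (norm_nonneg _) hz two_ne_zero
  have hre : 0 < z.re := by
    have h := (Complex.re_le_norm (1 - z)).trans_lt hnorm
    rw [Complex.sub_re, Complex.one_re] at h
    linarith
  have hquot : -z / (-z - 1) = z ^ 2 := by
    have h : -z - 1 ≠ 0 := fun h => by
      have := congrArg Complex.re h
      simp only [Complex.sub_re, Complex.neg_re, Complex.one_re, Complex.zero_re] at this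
      linarith
    rw [div_eq_iff h]
    linear_combination z * hsq
  -- Three linear equations for the values of `dilog` at `z`, `-z` and `z ^ 2 = 1 - z`.
  have hreflection := dilog_add_dilog_one_sub hz hnorm
  have hlanden := dilog_add_dilog_div_sub_one (z := -z) (by rwa [norm_neg])
    (by rw [Complex.neg_re]; linarith)
  have hduplication := dilog_add_dilog_neg hz.le
  rw [hquot, sub_neg_eq_add, hsq] at hlanden
  rw [hsq] at hduplication
  linear_combination 3 / 5 * hreflection + 2 / 5 * hduplication - 2 / 5 * hlanden

theorem inv_goldenRatio_eq_sub_one : goldenRatio⁻¹ = goldenRatio - 1 := by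
  linear_combination inv_goldenRatio - goldenRatio_add_goldenConj

theorem dilog_inv_goldenRatio :
    dilog (goldenRatio⁻¹ : ℝ) = (π : ℂ) ^ 2 / 10 - (Real.log goldenRatio : ℂ) ^ 2 := by
  have hpos : 0 < goldenRatio⁻¹ := inv_pos.2 goldenRatio_pos
  have hsq : goldenRatio⁻¹ ^ 2 = 1 - goldenRatio⁻¹ := by
    linear_combination goldenRatio⁻¹ * inv_goldenRatio_eq_sub_one +
      inv_mul_cancel₀ goldenRatio_ne_zero
  have hnorm : ‖((goldenRatio⁻¹ : ℝ) : ℂ)‖ < 1 := by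
    rw [Complex.norm_of_nonneg hpos.le]
    exact inv_lt_one_of_one_lt₀ one_lt_goldenRatio
  have hlog : Complex.log (goldenRatio⁻¹ : ℝ) = -(Real.log goldenRatio : ℂ) := by
    rw [← Complex.ofReal_log hpos.le, Real.log_inv, Complex.ofReal_neg]
  have hlog_sub : Complex.log (1 - (goldenRatio⁻¹ : ℝ)) = -2 * (Real.log goldenRatio : ℂ) := by
    rw [← Complex.ofReal_one, ← Complex.ofReal_sub, ← hsq, ← Complex.ofReal_log (by positivity),
      Real.log_pow, Real.log_inv]
    push_cast
    ring
  have hlog_add : Complex.log (1 + (goldenRatio⁻¹ : ℝ)) = (Real.log goldenRatio : ℂ) := by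
    rw [← Complex.ofReal_one, ← Complex.ofReal_add, inv_goldenRatio_eq_sub_one,
      add_sub_cancel, Complex.ofReal_log goldenRatio_pos.le]
  rw [dilog_of_sq_eq_one_sub hnorm (mod_cast hsq), hlog, hlog_sub, hlog_add]
  ring

theorem dilog_of_pow_three_eq_one {w : ℂ} (hw : w ^ 3 = 1) :
    dilog w = (π : ℂ) ^ 2 / 54 + w * ∑' k : ℕ, 1 / (3 * (k : ℂ) + 1) ^ 2 +
      w ^ 2 * ∑' k : ℕ, 1 / (3 * (k : ℂ) + 2) ^ 2 := by
  have hnorm : ‖w‖ ≤ 1 := (Complex.norm_eq_one_of_pow_eq_one hw three_ne_zero).le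
  have hclass (j : ℕ) : ∑' m : ℕ, 1 / ((j + 3 * m : ℕ) : ℂ) ^ 2 * w ^ (j + 3 * m) =
      w ^ j * ∑' m : ℕ, 1 / (3 * (m : ℂ) + j) ^ 2 := by
    rw [← tsum_mul_left]
    refine tsum_congr fun m => ?_
    rw [pow_add, pow_mul, hw, one_pow]
    push_cast
    ring
  have hzero : ∑' m : ℕ, 1 / (3 * (m : ℂ) + (0 : ℕ)) ^ 2 = (π : ℂ) ^ 2 / 54 := by
    calc ∑' m : ℕ, 1 / (3 * (m : ℂ) + (0 : ℕ)) ^ 2 = ∑' m : ℕ, 1 / 9 * (1 / (m : ℂ) ^ 2) :=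
          tsum_congr fun m => by rw [Nat.cast_zero, add_zero, mul_pow]; ring
      _ = (π : ℂ) ^ 2 / 54 := by rw [tsum_mul_left, hasSum_one_div_nat_sq.tsum_eq]; ring
  refine ((Nat.sumByResidueClasses (summable_dilog hnorm) 3).trans (Fin.sum_univ_three _)).trans ?_
  refine (congrArg₂ (· + ·) (congrArg₂ (· + ·) (hclass 0) (hclass 1)) (hclass 2)).trans ?_
  rw [hzero]
  simp

theorem tsum_one_div_three_mul_add_two_sq :
    ∑' k : ℕ, 1 / (3 * (k : ℂ) + 2) ^ 2 =
      4 * (π : ℂ) ^ 2 / 27 - ∑' k : ℕ, 1 / (3 * (k : ℂ) + 1) ^ 2 := by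
  have h := dilog_of_pow_three_eq_one (one_pow 3)
  rw [dilog_one] at h
  linear_combination -h

theorem dilog_of_pow_three_eq_neg_one {z : ℂ} (hz : z ^ 3 = -1) :
    dilog z = -(π : ℂ) ^ 2 / 108 +
      z * (3 / 2 * ∑' k : ℕ, 1 / (3 * (k : ℂ) + 1) ^ 2 - 2 * (π : ℂ) ^ 2 / 27) +
      z ^ 2 * (3 / 2 * ∑' k : ℕ, 1 / (3 * (k : ℂ) + 1) ^ 2 - 4 * (π : ℂ) ^ 2 / 27) := by
  have hw : (-z) ^ 3 = 1 := by linear_combination -hz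
  have hw2 : (z ^ 2) ^ 3 = 1 := by linear_combination (z ^ 3 - 1) * hz
  have hdup := dilog_add_dilog_neg (Complex.norm_eq_one_of_pow_eq_one hw three_ne_zero).le
  rw [neg_neg, neg_sq, dilog_of_pow_three_eq_one hw, dilog_of_pow_three_eq_one hw2,
    tsum_one_div_three_mul_add_two_sq] at hdup
  linear_combination hdup +
    z * (2 * (π : ℂ) ^ 2 / 27 - (∑' k : ℕ, 1 / (3 * (k : ℂ) + 1) ^ 2) / 2) * hz

/-! ### The series of `arsinh` and its logarithmic primitive -/

/-- The Taylor series at `0` of `z * (1 + z ^ 2) ^ (-1 / 2)` for `k = 0`, of `arsinh z` for `k = 1`,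
and of `∫ arsinh z / z` for `k = 2`: each is `z * d/dz` of the next one. It is used on the open unit
disc, where the series converges. -/
noncomputable def arsinhSeries (k : ℕ) (z : ℂ) : ℂ :=
  ∑' n : ℕ, Ring.choose (-1 / 2 : ℂ) n / (2 * n + 1) ^ k * z ^ (2 * n + 1)

theorem norm_choose_neg_half_div_le_one (k n : ℕ) :
    ‖Ring.choose (-1 / 2 : ℂ) n / (2 * n + 1) ^ k‖ ≤ 1 := by
  have h : ‖(2 * n + 1 : ℂ) ^ k‖ = (2 * n + 1 : ℝ) ^ k := by
    rw [norm_pow]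
    norm_cast
  rw [norm_div, h]
  exact div_le_one_of_le₀ ((norm_choose_neg_half_le_one n).trans
    (one_le_pow₀ (by linarith [n.cast_nonneg (α := ℝ)]))) (by positivity)

theorem arsinhSeries_zero_right (k : ℕ) : arsinhSeries k 0 = 0 := by simp [arsinhSeries]

theorem differentiableAt_arsinhSeries (k : ℕ) {z : ℂ} (hz : ‖z‖ < 1) :
    DifferentiableAt ℂ (arsinhSeries k) z :=
  differentiableAt_tsum_mul_pow (norm_choose_neg_half_div_le_one k) two_mul_add_one_injective hz

theorem mul_deriv_arsinhSeries (k : ℕ) {z : ℂ} (hz : ‖z‖ < 1) :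
    z * deriv (arsinhSeries (k + 1)) z = arsinhSeries k z := by
  refine (mul_deriv_tsum_mul_pow (norm_choose_neg_half_div_le_one (k + 1))
    two_mul_add_one_injective hz).trans (tsum_congr fun n => ?_)
  have h : (2 * n + 1 : ℂ) ≠ 0 := by exact_mod_cast (2 * n).succ_ne_zero
  push_cast
  field_simp
  ring

theorem hasDerivAt_arsinhSeries_succ (k : ℕ) {z : ℂ} (hz : ‖z‖ < 1) (h0 : z ≠ 0) :
    HasDerivAt (arsinhSeries (k + 1)) (arsinhSeries k z / z) z := by
  rw [← mul_deriv_arsinhSeries k hz, mul_div_cancel_left₀ _ h0]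
  exact (differentiableAt_arsinhSeries _ hz).hasDerivAt

theorem arsinhSeries_zero_left {z : ℂ} (hz : ‖z‖ < 1) :
    arsinhSeries 0 z = z * (1 + z ^ 2) ^ (-1 / 2 : ℂ) := by
  have hsq : z ^ 2 ∈ Metric.eball (0 : ℂ) 1 := by
    rw [← ENNReal.ofReal_one, Metric.eball_ofReal, mem_ball_zero_iff, norm_pow]
    exact pow_lt_one₀ (norm_nonneg z) hz two_ne_zero
  have h := (Complex.one_add_cpow_hasFPowerSeriesOnBall_zero (a := -1 / 2)).hasSum hsq
  rw [zero_add] at h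
  rw [← h.tsum_eq, ← tsum_mul_left]
  refine tsum_congr fun n => ?_
  simp only [binomialSeries_apply, List.ofFn_const, List.prod_replicate, smul_eq_mul, pow_zero]
  ring

theorem norm_sinh_sq (u : ℂ) :
    ‖Complex.sinh u‖ ^ 2 = Real.sinh u.re ^ 2 + Real.sin u.im ^ 2 := by
  have h : Complex.sinh u = (Real.sinh u.re * Real.cos u.im : ℝ) +
      (Real.cosh u.re * Real.sin u.im : ℝ) * Complex.I := by
    conv_lhs => rw [← Complex.re_add_im u, Complex.sinh_add, Complex.cosh_mul_I, Complex.sinh_mul_I]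
    push_cast
    ring
  rw [h, Complex.sq_norm, Complex.normSq_add_mul_I]
  linear_combination Real.sin u.im ^ 2 * Real.cosh_sq u.re +
    Real.sinh u.re ^ 2 * Real.sin_sq_add_cos_sq u.im

theorem norm_sinh_le_norm_sinh {u w : ℂ} (hre : |w.re| ≤ |u.re|) (him : |w.im| ≤ |u.im|)
    (hu : |u.im| ≤ π / 2) : ‖Complex.sinh w‖ ≤ ‖Complex.sinh u‖ := by
  rw [← sq_le_sq₀ (norm_nonneg _) (norm_nonneg _), norm_sinh_sq, norm_sinh_sq]
  have hsinh : |Real.sinh w.re| ≤ |Real.sinh u.re| := by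
    rwa [Real.abs_sinh, Real.abs_sinh, Real.sinh_le_sinh]
  have hsin : |Real.sin w.im| ≤ |Real.sin u.im| := by
    rw [Real.abs_sin_eq_sin_abs_of_abs_le_pi (by linarith [pi_pos]),
      Real.abs_sin_eq_sin_abs_of_abs_le_pi (by linarith [pi_pos])]
    exact Real.sin_le_sin_of_le_of_le_pi_div_two (by linarith [pi_pos, abs_nonneg w.im]) hu him
  exact add_le_add (sq_le_sq.2 hsinh) (sq_le_sq.2 hsin)

theorem sinh_ne_zero_of_abs_im_lt_pi {u : ℂ} (h0 : u ≠ 0) (hu : |u.im| < π) :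
    Complex.sinh u ≠ 0 := by
  intro h
  have hsq := norm_sinh_sq u
  rw [h, norm_zero, zero_pow two_ne_zero, eq_comm,
    add_eq_zero_iff_of_nonneg (sq_nonneg _) (sq_nonneg _), sq_eq_zero_iff, sq_eq_zero_iff,
    Real.sinh_eq_zero, Real.sin_eq_zero_iff_of_lt_of_lt (neg_lt_of_abs_lt hu) (lt_of_abs_lt hu)]
    at hsq
  exact h0 (Complex.ext hsq.1 hsq.2)

theorem cosh_re_pos {u : ℂ} (hu : |u.im| < π / 2) : 0 < (Complex.cosh u).re := by
  rw [← Complex.re_add_im u, Complex.cosh_add, Complex.cosh_mul_I, Complex.sinh_mul_I,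
    ← Complex.ofReal_cosh, ← Complex.ofReal_cos, ← Complex.ofReal_sinh, ← Complex.ofReal_sin]
  simpa [-Complex.ofReal_cos, -Complex.ofReal_cosh] using
    mul_pos (Real.cosh_pos u.re) (Real.cos_pos_of_mem_Ioo (abs_lt.1 hu))

theorem arsinhSeries_zero_sinh {u : ℂ} (hu : ‖Complex.sinh u‖ < 1) (him : |u.im| < π / 2) :
    arsinhSeries 0 (Complex.sinh u) = Complex.sinh u / Complex.cosh u := by
  rw [arsinhSeries_zero_left hu, add_comm 1, ← Complex.cosh_sq, neg_div, Complex.cpow_neg, one_div,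
    Complex.sq_cpow_two_inv (cosh_re_pos him), div_eq_mul_inv]

theorem abs_re_le_and_abs_im_le_of_mem_segment_zero {u w : ℂ} (hw : w ∈ segment ℝ 0 u) :
    |w.re| ≤ |u.re| ∧ |w.im| ≤ |u.im| := by
  rw [segment_eq_image] at hw
  obtain ⟨t, ⟨h0, h1⟩, rfl⟩ := hw
  simp only [smul_zero, zero_add, Complex.real_smul, Complex.re_ofReal_mul, Complex.im_ofReal_mul,
    abs_mul, abs_of_nonneg h0]
  exact ⟨mul_le_of_le_one_left (abs_nonneg _) h1, mul_le_of_le_one_left (abs_nonneg _) h1⟩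

theorem abs_im_lt_of_mem_openSegment_zero {u w : ℂ} {c : ℝ} (hc : 0 < c) (hu : |u.im| ≤ c)
    (hw : w ∈ openSegment ℝ 0 u) : |w.im| < c := by
  rw [openSegment_eq_image] at hw
  obtain ⟨t, ⟨h0, h1⟩, rfl⟩ := hw
  simp only [smul_zero, zero_add, Complex.real_smul, Complex.im_ofReal_mul, abs_mul,
    abs_of_pos h0]
  nlinarith

theorem hasDerivAt_arsinhSeries_succ_sinh (k : ℕ) {u : ℂ} (hu : ‖Complex.sinh u‖ < 1)
    (him : |u.im| < π) (h0 : u ≠ 0) :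
    HasDerivAt (fun w => arsinhSeries (k + 1) (Complex.sinh w))
      (arsinhSeries k (Complex.sinh u) * Complex.cosh u / Complex.sinh u) u :=
  ((hasDerivAt_arsinhSeries_succ k hu (sinh_ne_zero_of_abs_im_lt_pi h0 him)).comp u
    (Complex.hasDerivAt_sinh u)).congr_deriv (by ring)

theorem continuousOn_arsinhSeries_sinh (k : ℕ) :
    ContinuousOn (fun w => arsinhSeries k (Complex.sinh w)) {w | ‖Complex.sinh w‖ < 1} :=
  fun _ hw => ((differentiableAt_arsinhSeries k hw).continuousAt.comp
    Complex.continuous_sinh.continuousAt).continuousWithinAt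

theorem arsinhSeries_one_sinh {u : ℂ} (hu : ‖Complex.sinh u‖ < 1) (him : |u.im| < π / 2) :
    arsinhSeries 1 (Complex.sinh u) = u := by
  have hdom {w : ℂ} (hw : w ∈ segment ℝ 0 u) : ‖Complex.sinh w‖ < 1 ∧ |w.im| < π / 2 :=
    have ⟨hre, him'⟩ := abs_re_le_and_abs_im_le_of_mem_segment_zero hw
    ⟨(norm_sinh_le_norm_sinh hre him' him.le).trans_lt hu, him'.trans_lt him⟩
  have hcont : ContinuousOn (fun w => arsinhSeries 1 (Complex.sinh w) - w) (segment ℝ 0 u) :=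
    ((continuousOn_arsinhSeries_sinh 1).mono fun _ hw => (hdom hw).1).sub continuousOn_id
  have hderiv {w : ℂ} (hw : w ∈ openSegment ℝ 0 u) (hw0 : w ≠ 0) :
      HasDerivAt (fun w => arsinhSeries 1 (Complex.sinh w) - w) 0 w := by
    obtain ⟨hw1, hw2⟩ := hdom (openSegment_subset_segment ℝ 0 u hw)
    have hpi : |w.im| < π := hw2.trans (by linarith [pi_pos])
    have hsinh := sinh_ne_zero_of_abs_im_lt_pi hw0 hpi
    have hcosh : Complex.cosh w ≠ 0 := fun h => by simpa [h] using cosh_re_pos hw2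
    refine ((hasDerivAt_arsinhSeries_succ_sinh 0 hw1 hpi hw0).sub (hasDerivAt_id' w)).congr_deriv ?_
    rw [arsinhSeries_zero_sinh hw1 hw2]
    field_simp
    ring
  simpa [arsinhSeries_zero_right, sub_eq_zero] using
    eq_of_hasDerivAt_zero_of_openSegment hcont fun w hw hw0 => hderiv hw hw0

theorem norm_one_sub_exp_sq (v : ℂ) :
    ‖1 - Complex.exp v‖ ^ 2 = 1 - Real.exp v.re * (2 * Real.cos v.im - Real.exp v.re) := by
  rw [Complex.sq_norm, Complex.normSq_apply, Complex.sub_re, Complex.sub_im, Complex.exp_re,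
    Complex.exp_im, Complex.one_re, Complex.one_im]
  linear_combination Real.exp v.re ^ 2 * Real.sin_sq_add_cos_sq v.im

theorem norm_one_sub_exp_le_one {v : ℂ} (hre : v.re ≤ 0) (him : |v.im| ≤ π / 3) :
    ‖1 - Complex.exp v‖ ≤ 1 := by
  have hcos : 1 / 2 ≤ Real.cos v.im := by
    rw [← Real.cos_abs, ← Real.cos_pi_div_three]
    exact Real.cos_le_cos_of_nonneg_of_le_pi (abs_nonneg _) (by linarith [pi_pos]) him
  have hexp : Real.exp v.re ≤ 1 := Real.exp_le_one_iff.2 hre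
  rw [← sq_le_one_iff₀ (norm_nonneg _), norm_one_sub_exp_sq, sub_le_self_iff]
  exact mul_nonneg (Real.exp_pos _).le (by linarith)

theorem norm_one_sub_exp_lt_one {v : ℂ} (hre : v.re ≤ 0) (him : |v.im| < π / 3) :
    ‖1 - Complex.exp v‖ < 1 := by
  have hcos : 1 / 2 < Real.cos v.im := by
    rw [← Real.cos_abs, ← Real.cos_pi_div_three]
    exact Real.cos_lt_cos_of_nonneg_of_le_pi (abs_nonneg _) (by linarith [pi_pos]) him
  have hexp : Real.exp v.re ≤ 1 := Real.exp_le_one_iff.2 hre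
  rw [← sq_lt_one_iff₀ (norm_nonneg _), norm_one_sub_exp_sq, sub_lt_self_iff]
  exact mul_pos (Real.exp_pos _) (by linarith)

theorem one_sub_exp_neg_two_mul (u : ℂ) :
    1 - Complex.exp (-2 * u) = 2 * Complex.exp (-u) * Complex.sinh u := by
  have h : Complex.exp u * Complex.exp (-u) = 1 := by
    rw [← Complex.exp_add, add_neg_cancel, Complex.exp_zero]
  rw [show -2 * u = -u + -u by ring, Complex.exp_add, Complex.sinh]
  linear_combination -h

theorem abs_im_neg_two_mul (u : ℂ) : |(-2 * u).im| = 2 * |u.im| := by simp [abs_mul]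

theorem hasDerivAt_dilog_one_sub_exp {u : ℂ} (h0 : u ≠ 0) (hre : 0 ≤ u.re)
    (him : |u.im| < π / 6) :
    HasDerivAt (fun w => dilog (1 - Complex.exp (-2 * w)))
      (2 * u * Complex.exp (-u) / Complex.sinh u) u := by
  have hre' : (-2 * u).re ≤ 0 := by simpa
  have him' : |(-2 * u).im| < π / 3 := by
    rw [abs_im_neg_two_mul]
    linarith
  have hlog : Complex.log (Complex.exp (-2 * u)) = -2 * u :=
    Complex.log_exp (by linarith [neg_lt_of_abs_lt him', pi_pos])
      (by linarith [lt_of_abs_lt him', pi_pos])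
  have hsinh : Complex.sinh u ≠ 0 := sinh_ne_zero_of_abs_im_lt_pi h0 (by linarith [pi_pos])
  have hne : 1 - Complex.exp (-2 * u) ≠ 0 := by
    rw [one_sub_exp_neg_two_mul]
    exact mul_ne_zero (mul_ne_zero two_ne_zero (Complex.exp_ne_zero _)) hsinh
  have hinner : HasDerivAt (fun w => 1 - Complex.exp (-2 * w)) (2 * Complex.exp (-2 * u)) u :=
    ((((hasDerivAt_id' u).const_mul (-2)).cexp).const_sub 1).congr_deriv (by ring)
  refine ((hasDerivAt_dilog (norm_one_sub_exp_lt_one hre' him') hne).comp u hinner).congr_deriv ?_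
  rw [sub_sub_cancel, hlog, one_sub_exp_neg_two_mul, show -2 * u = -u + -u by ring, Complex.exp_add]
  field_simp [Complex.exp_ne_zero]
  ring

theorem arsinhSeries_two_sinh {u : ℂ} (hu : ‖Complex.sinh u‖ < 1) (hre : 0 ≤ u.re)
    (him : |u.im| ≤ π / 6) :
    arsinhSeries 2 (Complex.sinh u) = u ^ 2 / 2 + dilog (1 - Complex.exp (-2 * u)) / 2 := by
  have hdom {w : ℂ} (hw : w ∈ segment ℝ 0 u) :
      ‖Complex.sinh w‖ < 1 ∧ 0 ≤ w.re ∧ |w.im| ≤ π / 6 :=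
    have ⟨hre', him'⟩ := abs_re_le_and_abs_im_le_of_mem_segment_zero hw
    ⟨(norm_sinh_le_norm_sinh hre' him' (by linarith [pi_pos])).trans_lt hu,
      (convex_halfSpace_re_ge 0).segment_subset (by simp) hre hw, him'.trans him⟩
  have hcont : ContinuousOn (fun w => arsinhSeries 2 (Complex.sinh w) -
      (w ^ 2 / 2 + dilog (1 - Complex.exp (-2 * w)) / 2)) (segment ℝ 0 u) := by
    refine ((continuousOn_arsinhSeries_sinh 2).mono fun _ hw => (hdom hw).1).sub
      (.add (by fun_prop) (.div_const ?_ 2))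
    refine continuousOn_dilog.comp (by fun_prop) fun w hw => mem_closedBall_zero_iff.2 ?_
    obtain ⟨-, h1, h2⟩ := hdom hw
    exact norm_one_sub_exp_le_one (by simpa) (by rw [abs_im_neg_two_mul]; linarith)
  have hderiv {w : ℂ} (hw : w ∈ openSegment ℝ 0 u) (hw0 : w ≠ 0) :
      HasDerivAt (fun w => arsinhSeries 2 (Complex.sinh w) -
        (w ^ 2 / 2 + dilog (1 - Complex.exp (-2 * w)) / 2)) 0 w := by
    obtain ⟨hw1, hw2, -⟩ := hdom (openSegment_subset_segment ℝ 0 u hw)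
    have hw3 := abs_im_lt_of_mem_openSegment_zero (by positivity) him hw
    have hsinh := sinh_ne_zero_of_abs_im_lt_pi hw0 (by linarith [pi_pos])
    refine ((hasDerivAt_arsinhSeries_succ_sinh 1 hw1 (by linarith [pi_pos]) hw0).sub
      ((((hasDerivAt_id' w).pow 2).div_const 2).add
        ((hasDerivAt_dilog_one_sub_exp hw0 hw2 hw3).div_const 2))).congr_deriv ?_
    rw [arsinhSeries_one_sinh hw1 (by linarith [pi_pos]), ← Complex.cosh_sub_sinh]
    field_simp
    ring
  simpa [arsinhSeries_zero_right, dilog_zero, sub_eq_zero] using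
    eq_of_hasDerivAt_zero_of_openSegment hcont fun w hw hw0 => hderiv hw hw0

theorem arsinhSeries_two_one_half : arsinhSeries 2 (1 / 2) = (π : ℂ) ^ 2 / 20 := by
  have hsinh : Complex.sinh (Real.log goldenRatio) = 1 / 2 := by
    rw [← Complex.ofReal_sinh, Real.sinh_log goldenRatio_pos, inv_goldenRatio_eq_sub_one]
    norm_num
  have hexp : 1 - Complex.exp (-2 * Real.log goldenRatio) = (goldenRatio⁻¹ : ℝ) := by
    rw [one_sub_exp_neg_two_mul, hsinh, ← Complex.ofReal_neg, ← Complex.ofReal_exp, Real.exp_neg,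
      Real.exp_log goldenRatio_pos]
    ring
  have h := arsinhSeries_two_sinh (u := Real.log goldenRatio) (by rw [hsinh]; norm_num)
    (by simpa using (Real.log_pos one_lt_goldenRatio).le)
    (by rw [Complex.ofReal_im, abs_zero]; positivity)
  rw [hsinh, hexp, dilog_inv_goldenRatio] at h
  linear_combination h

theorem arsinhSeries_two_I_mul_one_half :
    arsinhSeries 2 (Complex.I * (1 / 2)) = (√3 : ℂ) / 4 *
      (3 * ∑' k : ℕ, 1 / (3 * (k : ℂ) + 1) ^ 2 - 2 * (π : ℂ) ^ 2 / 9) * Complex.I := by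
  set ζ : ℂ := (1 + √3 * Complex.I) / 2 with hζ
  have hζ_sq : ζ ^ 2 = ζ - 1 := by
    have h3 : (√3 : ℂ) ^ 2 = 3 := mod_cast Real.sq_sqrt zero_le_three
    rw [hζ]
    linear_combination (√3 : ℂ) ^ 2 / 4 * Complex.I_sq - h3 / 4
  have hsinh : Complex.sinh ((π / 6 : ℝ) * Complex.I) = Complex.I * (1 / 2) := by
    rw [Complex.sinh_mul_I, ← Complex.ofReal_sin, Real.sin_pi_div_six]
    push_cast
    ring
  have hcosh : Complex.cosh ((π / 6 : ℝ) * Complex.I) = √3 / 2 := by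
    rw [Complex.cosh_mul_I, ← Complex.ofReal_cos, Real.cos_pi_div_six]
    push_cast
    rfl
  have hexp : 1 - Complex.exp (-2 * ((π / 6 : ℝ) * Complex.I)) = ζ := by
    rw [one_sub_exp_neg_two_mul, ← Complex.cosh_sub_sinh, hsinh, hcosh, hζ]
    linear_combination -Complex.I_sq / 2
  have h := arsinhSeries_two_sinh (u := (π / 6 : ℝ) * Complex.I)
    (by rw [hsinh]; norm_num) (by simp) (by simp [abs_of_pos, pi_pos])
  rw [hsinh, hexp, dilog_of_pow_three_eq_neg_one (by linear_combination (ζ + 1) * hζ_sq), hζ_sq,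
    hζ, mul_pow, Complex.I_sq] at h
  rw [h]
  push_cast
  ring

theorem arsinhSeries_sub_I_mul_arsinhSeries (k : ℕ) {z : ℂ} (hz : ‖z‖ < 1) :
    arsinhSeries k z - Complex.I * arsinhSeries k (Complex.I * z) =
      2 * z * ∑' n : ℕ, Ring.choose (-1 / 2 : ℂ) (2 * n) / (2 * (2 * n : ℕ) + 1) ^ k *
        (z ^ 4) ^ n := by
  have h := tsum_add_tsum_alternating (summable_mul_pow (norm_choose_neg_half_div_le_one k)
    two_mul_add_one_injective hz)
  have hI : -Complex.I * arsinhSeries k (Complex.I * z) =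
      ∑' n : ℕ, (-1) ^ n * (Ring.choose (-1 / 2 : ℂ) n / (2 * n + 1) ^ k * z ^ (2 * n + 1)) := by
    rw [arsinhSeries, ← tsum_mul_left]
    refine tsum_congr fun n => ?_
    rw [mul_pow, pow_succ Complex.I, pow_mul Complex.I, Complex.I_sq]
    linear_combination -(-1) ^ n *
      (Ring.choose (-1 / 2 : ℂ) n / (2 * n + 1) ^ k * z ^ (2 * n + 1)) * Complex.I_sq
  rw [sub_eq_add_neg, ← neg_mul, hI, arsinhSeries, h, ← two_mul, mul_assoc,
    ← tsum_mul_left (a := z)]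
  congr 1
  refine tsum_congr fun n => ?_
  ring

theorem two_mul_mul_tsum_poch_quotient_eq_arsinhSeries {z : ℂ} (hz : ‖z‖ < 1) :
    2 * z * ∑' n : ℕ, ((poch (1/4) n ^ 3 * poch (3/4) n /
        (poch (1/2) n * poch (5/4) n ^ 2 * n.factorial) : ℝ) : ℂ) * (z ^ 4) ^ n =
      arsinhSeries 2 z - Complex.I * arsinhSeries 2 (Complex.I * z) := by
  simp only [arsinhSeries_sub_I_mul_arsinhSeries 2 hz, poch_quotient_eq_choose_neg_half]

/-- `₄F₃(1/4, 1/4, 1/4, 3/4; 1/2, 5/4, 5/4; 1/16)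
    = (1/2)·[π²·(1/10 − 1/(3√3)) + (1/(2√3))·ψ′(1/3)]`,
where `ψ′(1/3) = 9·∑_{k≥0} 1/(3k+1)²`. -/
theorem fourF_three_first :
    ∑' n : ℕ, (poch (1/4) n)^3 * poch (3/4) n /
        (poch (1/2) n * (poch (5/4) n)^2 * (n.factorial : ℝ)) * (1/16 : ℝ)^n
      = (1/2) * (π^2 * (1/10 - 1/(3 * Real.sqrt 3))
          + (9 / (2 * Real.sqrt 3)) * (∑' k : ℕ, 1 / (3 * (k : ℝ) + 1)^2)) := by
  have hseries := two_mul_mul_tsum_poch_quotient_eq_arsinhSeries (z := 1 / 2) (by norm_num)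
  rw [arsinhSeries_two_one_half, arsinhSeries_two_I_mul_one_half] at hseries
  have hinv : (√3 : ℂ)⁻¹ = √3 / 3 := mod_cast (Real.sqrt_div_self (x := 3)).symm
  rw [mul_one_div_cancel two_ne_zero, one_mul, one_div_pow, show (2 : ℂ) ^ 4 = 16 by norm_num]
    at hseries
  apply Complex.ofReal_injective
  push_cast at hseries ⊢
  rw [hseries]
  linear_combination -(√3 : ℂ) / 4 *
      (3 * ∑' k : ℕ, 1 / (3 * (k : ℂ) + 1) ^ 2 - 2 * (π : ℂ) ^ 2 / 9) * Complex.I_sq -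
    (-(π : ℂ) ^ 2 / 6 + 9 / 4 * ∑' k : ℕ, 1 / (3 * (k : ℂ) + 1) ^ 2) * hinv
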